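/- Let Δ be a Cohen-Macaulay simplicial forest on vertex set V(Δ) and let R = K[x_v : v ∈ V(Δ)] be a polynomial ring over a field K. Then for each 1 ≤ k ≤ ν(Δ), depth(R/I(Δ)^{[k]}) = |V(Δ)| − ν(Δ) + k − 1. -/

import Mathlib

open MvPolynomial

/-- A simplicial complex on the vertex set `V`, presented by its set of facets
(the maximal faces).  Every facet is nonempty and no facet contains another. -/
structure SimplicialComplexOn (V : Type) [Fintype V] [DecidableEq V] : Type where
  facets : Finset (Finset V)
  nonempty_facet : ∀ F ∈ facets, F.Nonempty
  antichain : ∀ F ∈ facets, ∀ G ∈ facets, F ⊆ G → F = G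

variable {V : Type} [Fintype V] [DecidableEq V]

/-- `F` is a leaf of the collection of facets `S`: either `F` is the only facet, or
there is a facet `G ≠ F` (a joint) with `F ∩ H ⊆ F ∩ G` for every facet `H ≠ F`. -/
def IsLeafOf (S : Finset (Finset V)) (F : Finset V) : Prop :=
  F ∈ S ∧ ((∀ H ∈ S, H = F) ∨
    ∃ G ∈ S, G ≠ F ∧ ∀ H ∈ S, H ≠ F → F ∩ H ⊆ F ∩ G)

/-- The forest property for a facet collection: every nonempty subcollection
(i.e. every nonempty subcomplex) has a leaf. -/
def HasLeafProp (S : Finset (Finset V)) : Prop :=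
  ∀ T ⊆ S, T.Nonempty → ∃ F, IsLeafOf T F

/-- A good leaf: a facet which is a leaf of every subcomplex containing it. -/
def IsGoodLeafOf (S : Finset (Finset V)) (F : Finset V) : Prop :=
  F ∈ S ∧ ∀ T ⊆ S, F ∈ T → IsLeafOf T F

/-- A special leaf: a leaf `F` such that for all facets `H, H' ≠ F`,
`H ∩ H' ≠ ∅` iff `(H ∩ H') \ F ≠ ∅`. -/
def IsSpecialLeafOf (S : Finset (Finset V)) (F : Finset V) : Prop :=
  IsLeafOf S F ∧ ∀ H ∈ S, ∀ H' ∈ S, H ≠ F → H' ≠ F →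
    ((H ∩ H').Nonempty ↔ ((H ∩ H') \ F).Nonempty)

/-- A matching: a subcollection of the facets that is pairwise disjoint. -/
def IsMatchingOf (S : Finset (Finset V)) (M : Finset (Finset V)) : Prop :=
  M ⊆ S ∧ ∀ F ∈ M, ∀ G ∈ M, F ≠ G → F ∩ G = ∅

/-- The matching number: maximum size of a matching. -/
noncomputable def matchingNumberOf (S : Finset (Finset V)) : ℕ :=
  sSup {n | ∃ M : Finset (Finset V), IsMatchingOf S M ∧ M.card = n}

/-- The facet collection `S` is grafted: it decomposes as `Fs ∪ Gs` where
(1) every vertex of a `G ∈ Gs` lies in some `F ∈ Fs`, (2) `Fs` is exactly the set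
of leaves of `S`, (3) `Fs` and `Gs` are disjoint, (4) the members of `Fs` are
pairwise disjoint, and (5) for each `G ∈ Gs`, deleting the facet `G` leaves a
grafted collection. -/
inductive IsGrafted : Finset (Finset V) → Prop where
  | intro (S Fs Gs : Finset (Finset V))
      (hunion : S = Fs ∪ Gs)
      (hdisj : Disjoint Fs Gs)
      (hcover : ∀ G ∈ Gs, ∀ v ∈ G, ∃ F ∈ Fs, v ∈ F)
      (hleaves : ∀ F, IsLeafOf S F ↔ F ∈ Fs)
      (hFdisj : ∀ F ∈ Fs, ∀ F' ∈ Fs, F ≠ F' → F ∩ F' = ∅)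
      (hrec : ∀ G ∈ Gs, IsGrafted (S.erase G)) :
      IsGrafted S

/-- `S` is the (minimal presentation of the) grafting of the collection `Gs`
with the simplices `Fs`. -/
def IsGraftingDecomp (S Fs Gs : Finset (Finset V)) : Prop :=
  S = Fs ∪ Gs ∧ Disjoint Fs Gs ∧
  (∀ G ∈ Gs, ∀ v ∈ G, ∃ F ∈ Fs, v ∈ F) ∧
  (∀ F, IsLeafOf S F ↔ F ∈ Fs) ∧
  (∀ F ∈ Fs, ∀ F' ∈ Fs, F ≠ F' → F ∩ F' = ∅) ∧
  (∀ G ∈ Gs, IsGrafted (S.erase G))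

/-- A Cohen-Macaulay simplicial forest, combinatorially: a grafted simplicial forest. -/
def IsCMForestFacets (S : Finset (Finset V)) : Prop :=
  HasLeafProp S ∧ IsGrafted S

/-- The closed neighborhood `N[F] = {F} ∪ {G ∈ S : G ≠ F, G ∩ F ≠ ∅}`. -/
def closedNbhd (S : Finset (Finset V)) (F : Finset V) : Finset (Finset V) :=
  insert F (S.filter fun G => G ≠ F ∧ (G ∩ F).Nonempty)

/-- The contraction of the facet collection `S` on `A`: the minimal members of
`{F \ A : F ∈ S}`. -/
def contraction (S : Finset (Finset V)) (A : Finset V) : Finset (Finset V) :=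
  (S.image fun F => F \ A).filter fun F' => ∀ G ∈ S, G \ A ⊆ F' → G \ A = F'

variable (K : Type) [Field K]

/-- The square-free monomial `x_S = ∏_{v ∈ S} x_v`. -/
noncomputable def xMon (S : Finset V) : MvPolynomial V K := ∏ v ∈ S, X v

/-- The facet ideal `I(Δ) = ⟨x_F : F a facet⟩`. -/
noncomputable def facetIdealOf (S : Finset (Finset V)) : Ideal (MvPolynomial V K) :=
  Ideal.span { p | ∃ F ∈ S, p = xMon K F }

/-- The `k`-th square-free power of an ideal: the ideal generated by all
square-free monomials lying in `I ^ k`. -/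
noncomputable def sqfreePow (I : Ideal (MvPolynomial V K)) (k : ℕ) :
    Ideal (MvPolynomial V K) :=
  Ideal.span { p | (∃ S : Finset V, p = xMon K S) ∧ p ∈ I ^ k }

/-- The depth of `R/I` with respect to the homogeneous maximal ideal
`m = ⟨x_v : v ∈ V⟩`: the largest length of an `R/I`-regular sequence of
elements of `m`. -/
noncomputable def gradedDepth (I : Ideal (MvPolynomial V K)) : ℕ :=
  sSup {n | ∃ rs : List (MvPolynomial V K), rs.length = n ∧
    (∀ r ∈ rs, r ∈ Ideal.span (Set.range (X : V → MvPolynomial V K))) ∧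
    RingTheory.Sequence.IsRegular (MvPolynomial V K ⧸ I) rs}

/-- `R/I` is Cohen-Macaulay: its depth equals its Krull dimension. -/
def IsCMQuot (I : Ideal (MvPolynomial V K)) : Prop :=
  ((gradedDepth K I : ℕ∞) : WithBot ℕ∞) = ringKrullDim (MvPolynomial V K ⧸ I)

set_option linter.unusedSectionVars false

section Algebra

/-- ideal-theoretic weak regularity of a list on `R ⧸ J`. -/
def WR {R : Type*} [CommRing R] : List R → Ideal R → Prop
  | [], _ => True
  | r :: rs, J => (∀ p, r * p ∈ J → p ∈ J) ∧ WR rs (J ⊔ Ideal.span {r})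

theorem WR_top {R : Type*} [CommRing R] (rs : List R) : WR rs (⊤ : Ideal R) := by
  induction rs with
  | nil => trivial
  | cons r rs ih => exact ⟨fun p _ => trivial, by simpa using ih⟩

theorem WR_of_ses {R : Type*} [CommRing R] (x : R) (rs : List R) :
    ∀ J J' : Ideal R, (∀ p, p ∈ J' ↔ p * x ∈ J) → WR rs J' →
      WR rs (J ⊔ Ideal.span {x}) → WR rs J := by
  induction rs with
  | nil => intros; trivial
  | cons r rs ih =>
    rintro J J' hJ' ⟨h1, h2⟩ ⟨h3, h4⟩
    refine ⟨?_, ih _ _ ?_ h2 ?_⟩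
    · intro p hp
      have := h3 p (Ideal.mem_sup_left hp)
      obtain ⟨j, hj, y, hy, rfl⟩ := Submodule.mem_sup.1 this
      obtain ⟨q, rfl⟩ := Ideal.mem_span_singleton'.1 hy
      refine J.add_mem hj ((hJ' q).1 (h1 q ((hJ' _).2 ?_)))
      have h5 : r * (j + q * x) - r * j ∈ J := J.sub_mem hp (J.mul_mem_left r hj)
      convert h5 using 1; ring
    · intro p
      constructor
      · intro hp
        obtain ⟨j, hj, y, hy, rfl⟩ := Submodule.mem_sup.1 hp
        obtain ⟨q, rfl⟩ := Ideal.mem_span_singleton'.1 hy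
        rw [add_mul]
        refine Ideal.add_mem _ (Ideal.mem_sup_left ((hJ' j).1 hj)) (Ideal.mem_sup_right ?_)
        exact Ideal.mem_span_singleton'.2 ⟨q * x, by ring⟩
      · intro hp
        obtain ⟨j, hj, y, hy, hjy⟩ := Submodule.mem_sup.1 hp
        obtain ⟨q, rfl⟩ := Ideal.mem_span_singleton'.1 hy
        have hq : r * q ∈ J ⊔ Ideal.span {x} := by
          have : r * q = -j + p * x := by rw [← hjy]; ring
          rw [this]
          exact Ideal.add_mem _ (Ideal.mem_sup_left (J.neg_mem hj))
            (Ideal.mem_sup_right (Ideal.mem_span_singleton'.2 ⟨p, rfl⟩))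
        obtain ⟨j', hj', y, hy, hjy'⟩ := Submodule.mem_sup.1 (h3 q hq)
        obtain ⟨t, rfl⟩ := Ideal.mem_span_singleton'.1 hy
        have h6 : p - r * t ∈ J' := by
          rw [hJ']
          have : (p - r * t) * x = j + r * j' := by
            have e1 : p * x = j + q * r := hjy.symm
            rw [sub_mul, e1, ← hjy']; ring
          rw [this]
          exact J.add_mem hj (J.mul_mem_left r hj')
        have : p = (p - r * t) + t * r := by ring
        rw [this]
        exact Ideal.add_mem _ (Ideal.mem_sup_left h6)
          (Ideal.mem_sup_right (Ideal.mem_span_singleton'.2 ⟨t, rfl⟩))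
    · rw [sup_right_comm]; exact h4

theorem smulRegular_quot_iff {R : Type*} [CommRing R] (J : Ideal R) (r : R) :
    IsSMulRegular (R ⧸ J) r ↔ ∀ p, r * p ∈ J → p ∈ J := by
  rw [isSMulRegular_iff_right_eq_zero_of_smul]
  constructor
  · intro h p hp
    have := h (Ideal.Quotient.mk J p) (by
      rw [← Ideal.Quotient.mk_eq_mk, ← Submodule.Quotient.mk_smul, Submodule.Quotient.mk_eq_zero]
      exact hp)
    exact Ideal.Quotient.eq_zero_iff_mem.1 this
  · intro h m
    obtain ⟨p, rfl⟩ := Ideal.Quotient.mk_surjective m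
    intro hp
    rw [← Ideal.Quotient.mk_eq_mk, ← Submodule.Quotient.mk_smul, Submodule.Quotient.mk_eq_zero] at hp
    exact Ideal.Quotient.eq_zero_iff_mem.2 (h p hp)

open scoped Pointwise in
noncomputable def quotEquivSup {R : Type*} [CommRing R] (J : Ideal R) (r : R) :
    QuotSMulTop r (R ⧸ J) ≃ₗ[R] (R ⧸ (J ⊔ Ideal.span {r})) :=
  (Submodule.quotEquivOfEq _ _ (by
    rw [Submodule.map_pointwise_smul]
    simp [Submodule.range_mkQ] :
      (r • ⊤ : Submodule R (R ⧸ J)) =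
        Submodule.map J.mkQ (r • ⊤ : Submodule R R))) ≪≫ₗ
    Submodule.quotientQuotientEquivQuotientSup J (r • ⊤ : Submodule R R) ≪≫ₗ
    Submodule.quotEquivOfEq _ _ (by
      rw [← Submodule.ideal_span_singleton_smul]; simp)

theorem WR_iff {R : Type*} [CommRing R] (rs : List R) : ∀ J : Ideal R,
    RingTheory.Sequence.IsWeaklyRegular (R ⧸ J) rs ↔ WR rs J := by
  induction rs with
  | nil => intro J; simp [WR]
  | cons r rs ih =>
    intro J
    rw [RingTheory.Sequence.isWeaklyRegular_cons_iff, smulRegular_quot_iff,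
      (quotEquivSup J r).isWeaklyRegular_congr, ih]
    rfl

theorem isRegular_iff_WR {R : Type*} [CommRing R] (rs : List R) (J : Ideal R) :
    RingTheory.Sequence.IsRegular (R ⧸ J) rs ↔ WR rs J ∧ J ⊔ Ideal.ofList rs ≠ ⊤ := by
  rw [RingTheory.Sequence.isRegular_iff, WR_iff]
  refine and_congr_right fun _ => not_congr ?_
  have h1 : (Ideal.ofList rs • ⊤ : Submodule R (R ⧸ J)) =
      Submodule.map J.mkQ (Ideal.ofList rs) := by
    conv_rhs => rw [show (Ideal.ofList rs : Submodule R R) = Ideal.ofList rs • ⊤ by simp]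
    rw [Submodule.map_smul'', Submodule.map_top, Submodule.range_mkQ]
  rw [h1]
  constructor
  · intro h
    have := congrArg (Submodule.comap J.mkQ) h
    rw [Submodule.comap_top, Submodule.comap_map_mkQ] at this
    exact this.symm
  · intro h
    have h2 : Submodule.comap J.mkQ (Submodule.map J.mkQ (Ideal.ofList rs)) = ⊤ := by
      rw [Submodule.comap_map_mkQ]; exact h
    have := congrArg (Submodule.map J.mkQ) h2
    rw [Submodule.map_comap_eq_of_surjective (Submodule.mkQ_surjective _),
      Submodule.map_top, Submodule.range_mkQ] at this
    exact this.symm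

theorem WR_length_le {R : Type*} [CommRing R] (rs : List R) : ∀ J : Ideal R,
    WR rs J → J ⊔ Ideal.ofList rs ≠ ⊤ → ((rs.length : ℕ) : WithBot ℕ∞) ≤ ringKrullDim (R ⧸ J) := by
  induction rs with
  | nil =>
    intro J _ h
    have : Nontrivial (R ⧸ J) := Ideal.Quotient.nontrivial_iff.2 (by simpa using h)
    simpa using ringKrullDim_nonneg_of_nontrivial
  | cons r rs ih =>
    rintro J ⟨h1, h2⟩ h3
    have h4 := ih _ h2 (by rw [Ideal.ofList_cons, ← sup_assoc] at h3; exact h3)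
    have h5 : Ideal.Quotient.mk J r ∈ nonZeroDivisors (R ⧸ J) := by
      rw [mem_nonZeroDivisors_iff_right]
      intro m
      obtain ⟨p, rfl⟩ := Ideal.Quotient.mk_surjective m
      intro hp
      rw [← map_mul, Ideal.Quotient.eq_zero_iff_mem] at hp
      exact Ideal.Quotient.eq_zero_iff_mem.2 (h1 p (by rwa [mul_comm] at hp))
    have h6 := ringKrullDim_quotient_succ_le_of_nonZeroDivisor h5
    have e : ((R ⧸ J) ⧸ (Ideal.span {Ideal.Quotient.mk J r})) ≃+* R ⧸ (J ⊔ Ideal.span {r}) :=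
      (Ideal.quotEquivOfEq (by rw [Ideal.map_span, Set.image_singleton])).trans
        (DoubleQuot.quotQuotEquivQuotSup J (Ideal.span {r}))
    rw [ringKrullDim_eq_of_ringEquiv e] at h6
    refine le_trans ?_ h6
    simp only [List.length_cons, Nat.cast_add, Nat.cast_one]
    gcongr

end Algebra
section Monomial

variable {V : Type} [Fintype V] [DecidableEq V] (K : Type) [Field K]

theorem xMon_eq_monomial (S : Finset V) :
    xMon K S = monomial (Finsupp.indicator S (fun _ _ => 1)) (1 : K) := by
  rw [xMon, monomial_eq]
  simp only [map_one, one_mul]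
  rw [Finsupp.prod, ← Finset.prod_subset (s₁ := (Finsupp.indicator S (fun _ _ => 1)).support)
    (s₂ := S) (Finsupp.support_indicator_subset _ _)]
  · refine Finset.prod_congr rfl fun v hv => ?_
    have hv' := Finsupp.support_indicator_subset _ _ hv
    rw [Finsupp.indicator_of_mem hv', pow_one]
  · intro v hv hv'
    exfalso; apply hv'
    rw [Finsupp.mem_support_iff, Finsupp.indicator_of_mem hv]
    exact one_ne_zero

theorem ind_le_iff (S : Finset V) (m : V →₀ ℕ) :
    Finsupp.indicator S (fun _ _ => 1) ≤ m ↔ S ⊆ m.support := by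
  constructor
  · intro h v hv
    have := h v
    rw [Finsupp.indicator_of_mem hv] at this
    rw [Finsupp.mem_support_iff]; omega
  · intro h v
    by_cases hv : v ∈ S
    · rw [Finsupp.indicator_of_mem hv]
      have := Finsupp.mem_support_iff.1 (h hv); omega
    · rw [Finsupp.indicator_of_notMem hv]; exact Nat.zero_le _

/-- the square-free monomial ideal of an up-closed predicate on finsets. -/
noncomputable def sqId (P : Finset V → Prop) : Ideal (MvPolynomial V K) :=
  Ideal.span (xMon K '' {S | P S})

def Up (P : Finset V → Prop) : Prop := ∀ S T, S ⊆ T → P S → P T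

variable {K}

theorem mem_sq {P : Finset V → Prop} (hP : Up P) (p : MvPolynomial V K) :
    p ∈ sqId K P ↔ ∀ m ∈ p.support, P m.support := by
  have h : xMon K '' {S | P S} = (fun s => monomial s (1 : K)) ''
      ((fun S : Finset V => Finsupp.indicator S (fun _ _ => 1)) '' {S | P S}) := by
    rw [Set.image_image]
    exact Set.image_congr fun S _ => xMon_eq_monomial K S
  rw [sqId, h, mem_ideal_span_monomial_image]
  refine forall₂_congr fun m _ => ?_
  constructor
  · rintro ⟨_, ⟨S, hS, rfl⟩, hle⟩
    exact hP _ _ ((ind_le_iff S m).1 hle) hS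
  · intro h
    exact ⟨_, ⟨_, h, rfl⟩, (ind_le_iff _ _).2 subset_rfl⟩

theorem sq_congr {P Q : Finset V → Prop} (h : ∀ T, P T ↔ Q T) : sqId K P = sqId K Q := by
  rw [show P = Q from funext fun T => propext (h T)]

theorem mem_sq_mul_X {P : Finset V → Prop} (hP : Up P) (v : V) (p : MvPolynomial V K) :
    p ∈ sqId K (fun T => P (insert v T)) ↔ p * X v ∈ sqId K P := by
  rw [mem_sq hP, mem_sq (fun S T h => hP _ _ (Finset.insert_subset_insert v h)), support_mul_X]
  simp only [Finset.mem_map, addRightEmbedding_apply, forall_exists_index, and_imp,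
    forall_apply_eq_imp_iff₂]
  refine forall₂_congr fun m _ => ?_
  have h : (m + Finsupp.single v 1).support = insert v m.support := by
    ext w
    simp only [Finsupp.mem_support_iff, Finsupp.add_apply, Finset.mem_insert, Finsupp.single_apply]
    by_cases h : v = w
    · simp [h]
    · simp [h, Ne.symm h]
  rw [h]

theorem sq_sup_xMon {P : Finset V → Prop} (hP : Up P) (U : Finset V) :
    sqId K P ⊔ Ideal.span {xMon K U} = sqId K (fun T => P T ∨ U ⊆ T) := by
  have hQ : Up (fun T => P T ∨ U ⊆ T) := by
    rintro S T h (h1 | h1)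
    · exact Or.inl (hP _ _ h h1)
    · exact Or.inr (h1.trans h)
  apply le_antisymm
  · refine sup_le (Ideal.span_mono (Set.image_mono fun S hS => Or.inl hS)) ?_
    rw [Ideal.span_singleton_le_iff_mem]
    exact Ideal.subset_span ⟨U, Or.inr subset_rfl, rfl⟩
  · refine Ideal.span_le.2 ?_
    rintro _ ⟨S, hS | hS, rfl⟩
    · exact Ideal.mem_sup_left (Ideal.subset_span ⟨S, hS, rfl⟩)
    · refine Ideal.mem_sup_right (Ideal.mem_span_singleton.2 ?_)
      exact Finset.prod_dvd_prod_of_subset _ _ _ hS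

theorem WR_sq {P : Finset V → Prop} (hP : Up P) (v : V) (rs : List (MvPolynomial V K))
    (h1 : WR rs (sqId K (fun T => P (insert v T))))
    (h2 : WR rs (sqId K (fun T => P T ∨ v ∈ T))) : WR rs (sqId K P) := by
  refine WR_of_ses (X v) rs _ _ (fun p => mem_sq_mul_X hP v p) h1 ?_
  have := sq_sup_xMon (K := K) hP {v}
  simp only [xMon, Finset.prod_singleton, Finset.singleton_subset_iff] at this
  rw [this]; exact h2

theorem sq_true {P : Finset V → Prop} (h : P ∅) : sqId K P = ⊤ := by
  rw [Ideal.eq_top_iff_one]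
  exact Ideal.subset_span ⟨∅, h, by simp [xMon]⟩

variable (V K) in
noncomputable def theta : ℕ → List (MvPolynomial V K)
  | 0 => []
  | d + 1 => esymm V K (d + 1) :: theta d

theorem theta_length (d : ℕ) : (theta V K d).length = d := by
  induction d with
  | zero => rfl
  | succ d ih => simp [theta, ih]

theorem theta_mem (d : ℕ) : ∀ r ∈ theta V K d,
    r ∈ Ideal.span (Set.range (X : V → MvPolynomial V K)) := by
  induction d with
  | zero => intro r hr; simp [theta] at hr
  | succ d ih =>
    intro r hr
    rcases List.mem_cons.1 hr with rfl | hr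
    · rw [esymm]
      refine Ideal.sum_mem _ fun S hS => ?_
      have hc := (Finset.mem_powersetCard.1 hS).2
      obtain ⟨v, hv⟩ : S.Nonempty := Finset.card_pos.1 (by omega)
      exact Ideal.mem_of_dvd _ (Finset.dvd_prod_of_mem _ hv) (Ideal.subset_span ⟨v, rfl⟩)
    · exact ih r hr

def PW (W : Finset V) (T : Finset V) : Prop := ∃ w ∈ W, w ∈ T

theorem up_PW (W : Finset V) : Up (PW W) := fun _ _ h ⟨w, hw, hT⟩ => ⟨w, hw, h hT⟩

theorem up_PWor (W U : Finset V) : Up (fun T => PW W T ∨ U ⊆ T) := by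
  rintro S T h (h1 | h1)
  · exact Or.inl (up_PW _ _ _ h h1)
  · exact Or.inr (h1.trans h)

theorem xMon_mul_mem {W U : Finset V} (h : Disjoint W U) (p : MvPolynomial V K)
    (hp : xMon K U * p ∈ sqId K (PW W)) : p ∈ sqId K (PW W) := by
  induction U using Finset.induction_on generalizing p with
  | empty => simpa [xMon] using hp
  | insert v U hv ih =>
    rw [Finset.disjoint_insert_right] at h
    apply ih h.2
    rw [show xMon K (insert v U) * p = (xMon K U * p) * X v by
      rw [xMon, Finset.prod_insert hv, xMon]; ring, ← mem_sq_mul_X (up_PW W)] at hp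
    rw [sq_congr (Q := fun T => PW W (insert v T))]
    · exact hp
    · intro T
      simp only [PW, Finset.mem_insert]
      refine exists_congr fun w => and_congr_right fun hw => ?_
      have : w ≠ v := fun e => h.1 (e ▸ hw)
      simp [this]

theorem WR_PWor (rs : List (MvPolynomial V K)) (W U : Finset V) (hd : Disjoint W U)
    (h : ∀ v ∈ U, WR rs (sqId K (PW (insert v W)))) :
    WR rs (sqId K (fun T => PW W T ∨ U ⊆ T)) := by
  induction U using Finset.induction_on with
  | empty => rw [sq_true (by simp)]; exact WR_top rs
  | insert v U hv ih =>
    rw [Finset.disjoint_insert_right] at hd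
    refine WR_sq (up_PWor _ _) v rs ?_ ?_
    · rw [sq_congr (Q := fun T => PW W T ∨ U ⊆ T)]
      · exact ih hd.2 fun u hu => h u (Finset.mem_insert_of_mem hu)
      · intro T
        refine or_congr ?_ ?_
        · simp only [PW, Finset.mem_insert]
          refine exists_congr fun w => and_congr_right fun hw => ?_
          have : w ≠ v := fun e => hd.1 (e ▸ hw)
          simp [this]
        · rw [Finset.insert_subset_insert_iff hv]
    · rw [sq_congr (Q := PW (insert v W))]
      · exact h v (Finset.mem_insert_self _ _)
      · intro T
        simp only [PW, Finset.mem_insert, exists_eq_or_imp]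
        constructor
        · rintro ((h1 | h1) | h1)
          · exact Or.inr h1
          · exact Or.inl (h1 (Finset.mem_insert_self _ _))
          · exact Or.inl h1
        · rintro (h1 | h1)
          · exact Or.inr h1
          · exact Or.inl (Or.inl h1)

theorem WR_PW (d : ℕ) : ∀ W : Finset V, W.card + d = Fintype.card V →
    WR (theta V K d) (sqId K (PW W)) := by
  induction d with
  | zero => intros; trivial
  | succ d ih =>
    intro W hW
    have hcard : Wᶜ.card = d + 1 := by rw [Finset.card_compl]; omega
    have he : ∃ q ∈ sqId K (PW W), esymm V K (d + 1) = xMon K Wᶜ + q := by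
      refine ⟨∑ S ∈ (Finset.powersetCard (d + 1) Finset.univ).erase Wᶜ, ∏ v ∈ S, X v, ?_, ?_⟩
      · refine Ideal.sum_mem _ fun S hS => Ideal.subset_span ⟨S, ?_, rfl⟩
        rw [Finset.mem_erase, Finset.mem_powersetCard] at hS
        by_contra hcon
        apply hS.1
        apply Finset.eq_of_subset_of_card_le
        · intro v hv
          rw [Finset.mem_compl]
          exact fun hw => hcon ⟨v, hw, hv⟩
        · omega
      · rw [esymm, xMon, Finset.add_sum_erase (Finset.powersetCard (d + 1) Finset.univ)
          (fun S => ∏ v ∈ S, (X v : MvPolynomial V K))]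
        rw [Finset.mem_powersetCard]
        exact ⟨Finset.subset_univ _, hcard⟩
    obtain ⟨q, hq, he⟩ := he
    have hd : Disjoint W Wᶜ := disjoint_compl_right
    refine ⟨?_, ?_⟩
    · intro p hp
      apply xMon_mul_mem hd
      have := Ideal.sub_mem _ hp (Ideal.mul_mem_right p _ hq)
      rw [he] at this
      convert this using 1; ring
    · have : sqId K (PW W) ⊔ Ideal.span {esymm V K (d + 1)} =
          sqId K (PW W) ⊔ Ideal.span {xMon K Wᶜ} := by
        apply le_antisymm <;> refine sup_le le_sup_left ?_ <;>
          rw [Ideal.span_singleton_le_iff_mem]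
        · rw [he]
          exact Ideal.add_mem _ (Ideal.mem_sup_right (Ideal.mem_span_singleton_self _))
            (Ideal.mem_sup_left hq)
        · rw [show xMon K Wᶜ = esymm V K (d + 1) - q by rw [he]; ring]
          exact Ideal.sub_mem _ (Ideal.mem_sup_right (Ideal.mem_span_singleton_self _))
            (Ideal.mem_sup_left hq)
      rw [this, sq_sup_xMon (up_PW W)]
      refine WR_PWor _ _ _ hd fun v hv => ih _ ?_
      rw [Finset.card_insert_of_notMem (Finset.mem_compl.1 hv)]; omega

end Monomial
section Comb

variable {V : Type} [Fintype V] [DecidableEq V]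

theorem HasLeafProp.mono {S T : Finset (Finset V)} (h : HasLeafProp S) (hT : T ⊆ S) :
    HasLeafProp T := fun U hU => h U (hU.trans hT)

theorem HasLeafProp.restrict {S : Finset (Finset V)} (h : HasLeafProp S) (U : Finset V) :
    HasLeafProp (S.image (fun H => H ∩ U)) := by
  intro T hT hTne
  have hch : ∀ t : Finset V, ∃ H : Finset V, t ∈ T → H ∈ S ∧ H ∩ U = t := by
    intro t
    by_cases ht : t ∈ T
    · obtain ⟨H, hH, rfl⟩ := Finset.mem_image.1 (hT ht)
      exact ⟨H, fun _ => ⟨hH, rfl⟩⟩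
    · exact ⟨∅, fun h => absurd h ht⟩
  choose f hf using hch
  obtain ⟨F, hF, hleaf⟩ := h (T.image f) (by
    intro H hH
    obtain ⟨t, ht, rfl⟩ := Finset.mem_image.1 hH
    exact (hf t ht).1) (hTne.image f)
  obtain ⟨t, ht, rfl⟩ := Finset.mem_image.1 hF
  refine ⟨t, ht, ?_⟩
  have hinj : ∀ s ∈ T, f s = f t → s = t := by
    intro s hs hst
    rw [← (hf s hs).2, ← (hf t ht).2, hst]
  rcases hleaf with h1 | ⟨G, hG, hGF, h2⟩
  · left
    intro s hs
    exact hinj s hs (h1 _ (Finset.mem_image_of_mem f hs))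
  · right
    obtain ⟨g, hg, rfl⟩ := Finset.mem_image.1 hG
    refine ⟨g, hg, fun e => hGF (by rw [e]), ?_⟩
    intro s hs hst v hv
    have := h2 (f s) (Finset.mem_image_of_mem f hs) (fun e => hst (hinj s hs e))
    rw [← (hf s hs).2, ← (hf t ht).2] at hv
    rw [← (hf g hg).2, ← (hf t ht).2]
    simp only [Finset.mem_inter] at hv ⊢
    have h3 := this (Finset.mem_inter.2 ⟨hv.1.1, hv.2.1⟩)
    rw [Finset.mem_inter] at h3
    exact ⟨hv.1, h3.2, hv.1.2⟩

theorem two_leaves (n : ℕ) : ∀ T : Finset (Finset V), T.card = n → HasLeafProp T → 2 ≤ n →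
    ∀ M ∈ T, ∃ F ∈ T, F ≠ M ∧ ∃ G ∈ T, G ≠ F ∧ ∀ H ∈ T, H ≠ F → F ∩ H ⊆ F ∩ G := by
  induction n with
  | zero => intro T _ _ h; omega
  | succ n ih =>
    intro T hT hleaf hn M hM
    obtain ⟨F, hF, hF'⟩ := hleaf T subset_rfl ⟨M, hM⟩
    have hF2 : ∃ G ∈ T, G ≠ F ∧ ∀ H ∈ T, H ≠ F → F ∩ H ⊆ F ∩ G := by
      rcases hF' with h1 | h1
      · exfalso
        have : T.card ≤ 1 := Finset.card_le_one.2 fun a ha b hb => by rw [h1 a ha, h1 b hb]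
        omega
      · exact h1
    by_cases hFM : F = M
    · subst hFM
      obtain ⟨G, hG, hGF, hjoint⟩ := hF2
      have hGe : G ∈ T.erase F := Finset.mem_erase.2 ⟨hGF, hG⟩
      have hc : (T.erase F).card = n := by rw [Finset.card_erase_of_mem hM]; omega
      by_cases hn1 : n = 1
      · refine ⟨G, hG, hGF, F, hM, hGF.symm, ?_⟩
        intro H hH hHG
        by_cases hHF : H = F
        · rw [hHF]
        · exfalso; apply hHG
          exact Finset.card_le_one.1 (by omega) H (Finset.mem_erase.2 ⟨hHF, hH⟩) G hGe
      · obtain ⟨F', hF', hne, G', hG', hG'F', hj⟩ := ih (T.erase F) hc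
          (hleaf.mono (Finset.erase_subset _ _)) (by omega) G hGe
        refine ⟨F', Finset.mem_of_mem_erase hF', Finset.ne_of_mem_erase hF', G',
          Finset.mem_of_mem_erase hG', hG'F', ?_⟩
        intro H hH hHF'
        by_cases hHF : H = F
        · subst hHF
          refine subset_trans ?_ (hj G hGe hne.symm)
          intro v hv
          rw [Finset.mem_inter] at hv ⊢
          have := hjoint F' (Finset.mem_of_mem_erase hF') (Finset.ne_of_mem_erase hF')
            (Finset.mem_inter.2 ⟨hv.2, hv.1⟩)
          exact ⟨hv.1, (Finset.mem_inter.1 this).2⟩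
        · exact hj H (Finset.mem_erase.2 ⟨hHF, hH⟩) hHF'
    · exact ⟨F, hF, hFM, hF2⟩

theorem exists_nest (n : ℕ) : ∀ (S : Finset (Finset V)) (E : Finset V),
    (S.sup id).card + S.card ≤ n → HasLeafProp S → E ∈ S → ¬ (S.sup id ⊆ E) →
    ∃ v, v ∈ S.sup id ∧ v ∉ E ∧ ∀ H ∈ S, ∀ H' ∈ S, v ∈ H → v ∈ H' → H ⊆ H' ∨ H' ⊆ H := by
  induction n with
  | zero =>
    intro S E hc _ hE _
    have : 0 < S.card := Finset.card_pos.2 ⟨E, hE⟩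
    omega
  | succ n ih =>
    intro S E hc hleaf hE hX
    have hsub : ∀ H ∈ S, H ⊆ S.sup id := fun H hH => Finset.le_sup (f := id) hH
    by_cases hXS : S.sup id ∈ S
    · set X := S.sup id with hXdef
      have hEX : E ≠ X := fun e => hX (e ▸ subset_rfl)
      have hEe : E ∈ S.erase X := Finset.mem_erase.2 ⟨hEX, hE⟩
      by_cases hX' : (S.erase X).sup id ⊆ E
      · obtain ⟨v, hv, hvE⟩ := Finset.not_subset.1 hX
        refine ⟨v, hv, hvE, ?_⟩
        have key : ∀ H ∈ S, v ∈ H → H = X := by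
          intro H hH hvH
          by_contra hne
          exact hvE (hX' ((Finset.le_sup (f := id) (Finset.mem_erase.2 ⟨hne, hH⟩) :
            H ⊆ (S.erase X).sup id) hvH))
        intro H hH H' hH' h1 h2
        rw [key H hH h1, key H' hH' h2]
        exact Or.inl subset_rfl
      · have hle : (S.erase X).sup id ⊆ X := Finset.sup_mono (Finset.erase_subset _ _)
        have h1 := Finset.card_le_card hle
        have h2 := Finset.card_erase_of_mem hXS
        have h3 : 0 < S.card := Finset.card_pos.2 ⟨E, hE⟩
        obtain ⟨v, hv, hvE, hch⟩ := ih (S.erase X) E (by omega)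
          (hleaf.mono (Finset.erase_subset _ _)) hEe hX'
        refine ⟨v, hle hv, hvE, ?_⟩
        intro H hH H' hH' h1 h2
        by_cases e1 : H = X
        · right; rw [e1]; exact hsub H' hH'
        by_cases e2 : H' = X
        · left; rw [e2]; exact hsub H hH
        exact hch H (Finset.mem_erase.2 ⟨e1, hH⟩) H' (Finset.mem_erase.2 ⟨e2, hH'⟩) h1 h2
    · let Sm := S.filter fun F => ∀ H ∈ S, F ⊆ H → H = F
      have hSm : Sm ⊆ S := Finset.filter_subset _ _
      have hmax : ∀ H ∈ S, ∃ M ∈ Sm, H ⊆ M := by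
        intro H hH
        obtain ⟨M, hHM, hM⟩ := S.exists_le_maximal hH
        refine ⟨M, Finset.mem_filter.2 ⟨hM.1, fun H' hH' h => ?_⟩, hHM⟩
        exact subset_antisymm (hM.2 hH' h) h
      obtain ⟨M, hM, hEM⟩ := hmax E hE
      have hcard : 2 ≤ Sm.card := by
        by_contra hlt
        apply hXS
        have : S.sup id = M := by
          apply subset_antisymm _ (hsub M (hSm hM))
          apply Finset.sup_le
          intro H hH
          obtain ⟨M', hM', hHM'⟩ := hmax H hH
          rw [Finset.card_le_one.1 (by omega) M hM M' hM']
          exact hHM'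
        rw [this]; exact hSm hM
      obtain ⟨F, hF, hFM, G, hG, hGF, hj⟩ := two_leaves Sm.card Sm rfl (hleaf.mono hSm) hcard M hM
      have hanti : ∀ A ∈ Sm, ∀ B ∈ Sm, A ⊆ B → A = B := by
        intro A hA B hB h
        exact ((Finset.mem_filter.1 hA).2 B (hSm hB) h).symm
      let S' := insert (F ∩ G) (S.filter fun H => H ⊆ F)
      have hS'im : S' ⊆ S.image (fun H => H ∩ F) := by
        intro H hH
        rcases Finset.mem_insert.1 hH with rfl | hH
        · exact Finset.mem_image.2 ⟨G, hSm hG, Finset.inter_comm _ _⟩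
        · obtain ⟨h1, h2⟩ := Finset.mem_filter.1 hH
          exact Finset.mem_image.2 ⟨H, h1, Finset.inter_eq_left.2 h2⟩
      have hS'sup : S'.sup id = F := by
        apply subset_antisymm
        · apply Finset.sup_le
          intro H hH
          rcases Finset.mem_insert.1 hH with rfl | hH
          · exact Finset.inter_subset_left
          · exact (Finset.mem_filter.1 hH).2
        · exact Finset.le_sup (f := id) (Finset.mem_insert_of_mem
            (Finset.mem_filter.2 ⟨hSm hF, subset_rfl⟩))
      have hS'card : S'.card ≤ S.card := by
        exact (Finset.card_le_card hS'im).trans Finset.card_image_le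
      have hFlt : F.card < (S.sup id).card := by
        apply Finset.card_lt_card
        refine (Finset.ssubset_iff_subset_ne).2 ⟨hsub F (hSm hF), fun e => hXS (e ▸ hSm hF)⟩
      obtain ⟨v, hv, hvE, hch⟩ := ih S' (F ∩ G) (by rw [hS'sup]; omega)
        ((hleaf.restrict F).mono hS'im) (Finset.mem_insert_self _ _) (by
          rw [hS'sup]
          intro h
          exact hGF (hanti F hF G hG (h.trans Finset.inter_subset_right)).symm)
      rw [hS'sup] at hv
      have hvG : v ∉ G := fun h => hvE (Finset.mem_inter.2 ⟨hv, h⟩)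
      have hall : ∀ H ∈ S, v ∈ H → H ⊆ F := by
        intro H hH hvH
        obtain ⟨M', hM', hHM'⟩ := hmax H hH
        by_cases e : M' = F
        · rwa [← e]
        · exfalso
          exact hvG (Finset.mem_inter.1 (hj M' hM' e (Finset.mem_inter.2 ⟨hv, hHM' hvH⟩))).2
      refine ⟨v, hsub F (hSm hF) hv, ?_, ?_⟩
      · intro hvE'
        exact hvG (Finset.mem_inter.1 (hj M hM hFM.symm (Finset.mem_inter.2 ⟨hv, hEM hvE'⟩))).2
      · intro H hH H' hH' h1 h2
        exact hch H (Finset.mem_insert_of_mem (Finset.mem_filter.2 ⟨hH, hall H hH h1⟩)) H'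
          (Finset.mem_insert_of_mem (Finset.mem_filter.2 ⟨hH', hall H' hH' h2⟩)) h1 h2

theorem HasLeafProp.insert_empty {S : Finset (Finset V)} (h : HasLeafProp S) :
    HasLeafProp (insert ∅ S) := by
  intro T hT hne
  by_cases he : ∅ ∈ T
  · refine ⟨∅, he, ?_⟩
    by_cases hh : ∀ H ∈ T, H = ∅
    · exact Or.inl hh
    · push Not at hh
      obtain ⟨G, hG, hG'⟩ := hh
      exact Or.inr ⟨G, hG, Finset.nonempty_iff_ne_empty.1 hG', by simp⟩
  · exact h T (fun t ht => (Finset.mem_insert.1 (hT ht)).resolve_left fun e => he (e ▸ ht)) hne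

end Comb
section Main

variable {V : Type} [Fintype V] [DecidableEq V] {K : Type} [Field K]

structure St (A : Finset (Finset V)) (Hs : Finset (Finset V)) : Prop where
  disj : ∀ B ∈ A, ∀ B' ∈ A, B ≠ B' → ∀ v, v ∈ B → v ∉ B'
  ne : ∀ H ∈ Hs, H.Nonempty
  cov : ∀ H ∈ Hs, ∀ v ∈ H, ∃ B ∈ A, v ∈ B
  chain : ∀ B ∈ A, ∀ H ∈ Hs, ∀ H' ∈ Hs, H ∩ B ⊆ H' ∩ B ∨ H' ∩ B ⊆ H ∩ B
  blk : ∀ B ∈ A, ∃ H ∈ Hs, H ⊆ B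
  leaf : HasLeafProp Hs

theorem St.pt {A Hs : Finset (Finset V)} (h : St A Hs) :
    ∀ B ∈ A, ∃ v ∈ B, ∀ H ∈ Hs, (H ∩ B).Nonempty → v ∈ H := by
  intro B hB
  obtain ⟨H0, hH0, hH0B⟩ := h.blk B hB
  obtain ⟨H1, hH1, hmin⟩ := (Hs.filter fun H => (H ∩ B).Nonempty).exists_min_image
    (fun H => (H ∩ B).card) ⟨H0, Finset.mem_filter.2 ⟨hH0, by
      rw [Finset.inter_eq_left.2 hH0B]; exact h.ne H0 hH0⟩⟩
  obtain ⟨hH1s, v, hv⟩ := Finset.mem_filter.1 hH1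
  rw [Finset.mem_inter] at hv
  refine ⟨v, hv.2, fun H hH hne => ?_⟩
  have hle := hmin H (Finset.mem_filter.2 ⟨hH, hne⟩)
  have hsub : H1 ∩ B ⊆ H ∩ B := by
    rcases h.chain B hB H1 hH1s H hH with h1 | h1
    · exact h1
    · exact (Finset.eq_of_subset_of_card_le h1 hle).symm.subset
  exact (Finset.mem_inter.1 (hsub (Finset.mem_inter.2 hv))).1

theorem St.two {A Hs : Finset (Finset V)} (h : St A Hs) {B : Finset V} (hB : B ∈ A)
    {H H' : Finset V} (hH : H ∈ Hs) (hH' : H' ∈ Hs) (h1 : (H ∩ B).Nonempty)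
    (h2 : (H' ∩ B).Nonempty) : ¬ (H ∩ H' = ∅) := by
  obtain ⟨v, _, hv⟩ := h.pt B hB
  exact (Finset.Nonempty.ne_empty ⟨v, Finset.mem_inter.2 ⟨hv H hH h1, hv H' hH' h2⟩⟩)

theorem St.card_le {A Hs M : Finset (Finset V)} (h : St A Hs) (hM : IsMatchingOf Hs M) :
    M.card ≤ A.card := by
  have hex : ∀ H : Finset V, ∃ B : Finset V, H ∈ Hs → B ∈ A ∧ (H ∩ B).Nonempty := by
    intro H
    by_cases hH : H ∈ Hs
    · obtain ⟨v, hv⟩ := h.ne H hH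
      obtain ⟨B, hB, hvB⟩ := h.cov H hH v hv
      exact ⟨B, fun _ => ⟨hB, v, Finset.mem_inter.2 ⟨hv, hvB⟩⟩⟩
    · exact ⟨∅, fun hh => absurd hh hH⟩
  choose f hf using hex
  refine Finset.card_le_card_of_injOn f (fun H hH => (hf H (hM.1 hH)).1) ?_
  intro H hH H' hH' he
  by_contra hne
  have h1 := hf H (hM.1 hH)
  have h2 := hf H' (hM.1 hH')
  rw [← he] at h2
  exact h.two h1.1 (hM.1 hH) (hM.1 hH') h1.2 h2.2 (hM.2 H hH H' hH' hne)

theorem St.nest {A Hs : Finset (Finset V)} (h : St A Hs) (hA : A.Nonempty) :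
    ∃ B ∈ A, ∀ H ∈ Hs, ∀ H' ∈ Hs, (H ∩ B).Nonempty → (H' ∩ B).Nonempty →
      ¬ H ⊆ B → ¬ H' ⊆ B → ∃ v, v ∉ B ∧ v ∈ H ∧ v ∈ H' := by
  have hex : ∀ B : Finset V, ∃ v : V, B ∈ A →
      v ∈ B ∧ ∀ H ∈ Hs, (H ∩ B).Nonempty → v ∈ H := by
    intro B
    by_cases hB : B ∈ A
    · obtain ⟨v, h1, h2⟩ := h.pt B hB
      exact ⟨v, fun _ => ⟨h1, h2⟩⟩
    · obtain ⟨B', hB'⟩ := hA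
      obtain ⟨v, _⟩ := h.pt B' hB'
      exact ⟨v, fun hh => absurd hh hB⟩
  choose f hf using hex
  let U := A.image f
  let S := insert ∅ (Hs.image fun H => H ∩ U)
  have hS : HasLeafProp S := (h.leaf.restrict U).insert_empty
  obtain ⟨B0, hB0⟩ := hA
  have hfU : ∀ B ∈ A, f B ∈ U := fun B hB => Finset.mem_image_of_mem f hB
  have hX : ¬ (S.sup id ⊆ ∅) := by
    intro hsub
    obtain ⟨H, hH, hHB⟩ := h.blk B0 hB0
    have hv : f B0 ∈ H := (hf B0 hB0).2 H hH (by
      rw [Finset.inter_eq_left.2 hHB]; exact h.ne H hH)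
    have : H ∩ U ⊆ S.sup id := Finset.le_sup (f := id)
      (Finset.mem_insert_of_mem (Finset.mem_image.2 ⟨H, hH, rfl⟩))
    exact absurd (hsub (this (Finset.mem_inter.2 ⟨hv, hfU B0 hB0⟩))) (Finset.notMem_empty _)
  obtain ⟨v, hv, -, hch⟩ := exists_nest _ S ∅ le_rfl hS (Finset.mem_insert_self _ _) hX
  obtain ⟨Y, hY, hvY⟩ := Finset.mem_sup.1 hv
  have hvU : v ∈ U := by
    rcases Finset.mem_insert.1 hY with rfl | hY
    · exact absurd hvY (Finset.notMem_empty _)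
    · obtain ⟨H, _, rfl⟩ := Finset.mem_image.1 hY
      exact (Finset.mem_inter.1 hvY).2
  obtain ⟨B, hB, rfl⟩ := Finset.mem_image.1 hvU
  have key : ∀ H ∈ Hs, ¬ H ⊆ B → ∃ w ∈ H ∩ U, w ∉ B := by
    intro H hH hHB
    obtain ⟨w, hwH, hwB⟩ := Finset.not_subset.1 hHB
    obtain ⟨B', hB', hwB'⟩ := h.cov H hH w hwH
    have hne : B' ≠ B := fun e => hwB (e ▸ hwB')
    refine ⟨f B', Finset.mem_inter.2 ⟨(hf B' hB').2 H hH ⟨w, Finset.mem_inter.2 ⟨hwH, hwB'⟩⟩,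
      hfU B' hB'⟩, h.disj B' hB' B hB hne _ (hf B' hB').1⟩
  refine ⟨B, hB, fun H hH H' hH' h1 h2 h3 h4 => ?_⟩
  have m1 := (hf B hB).2 H hH h1
  have m2 := (hf B hB).2 H' hH' h2
  rcases hch (H ∩ U) (Finset.mem_insert_of_mem (Finset.mem_image.2 ⟨H, hH, rfl⟩)) (H' ∩ U)
    (Finset.mem_insert_of_mem (Finset.mem_image.2 ⟨H', hH', rfl⟩))
    (Finset.mem_inter.2 ⟨m1, hvU⟩) (Finset.mem_inter.2 ⟨m2, hvU⟩) with hs | hs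
  · obtain ⟨w, hw, hwB⟩ := key H hH h3
    exact ⟨w, hwB, (Finset.mem_inter.1 hw).1, (Finset.mem_inter.1 (hs hw)).1⟩
  · obtain ⟨w, hw, hwB⟩ := key H' hH' h4
    exact ⟨w, hwB, (Finset.mem_inter.1 (hs hw)).1, (Finset.mem_inter.1 hw).1⟩

/-- removing block `B`: keep the members disjoint from `B`. -/
theorem St.del {A Hs : Finset (Finset V)} (h : St A Hs) {B : Finset V} (hB : B ∈ A) :
    St (A.erase B) (Hs.filter fun H => H ∩ B = ∅) where
  disj := fun C hC C' hC' => h.disj C (Finset.mem_of_mem_erase hC) C' (Finset.mem_of_mem_erase hC')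
  ne := fun H hH => h.ne H (Finset.mem_filter.1 hH).1
  cov := by
    intro H hH v hv
    obtain ⟨h1, h2⟩ := Finset.mem_filter.1 hH
    obtain ⟨C, hC, hvC⟩ := h.cov H h1 v hv
    refine ⟨C, Finset.mem_erase.2 ⟨?_, hC⟩, hvC⟩
    rintro rfl
    exact Finset.notMem_empty v (h2 ▸ Finset.mem_inter.2 ⟨hv, hvC⟩)
  chain := fun C hC H hH H' hH' => h.chain C (Finset.mem_of_mem_erase hC) H
    (Finset.mem_filter.1 hH).1 H' (Finset.mem_filter.1 hH').1
  blk := by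
    intro C hC
    obtain ⟨hne, hC⟩ := Finset.mem_erase.1 hC
    obtain ⟨H, hH, hHC⟩ := h.blk C hC
    refine ⟨H, Finset.mem_filter.2 ⟨hH, ?_⟩, hHC⟩
    rw [Finset.eq_empty_iff_forall_notMem]
    intro v hv
    rw [Finset.mem_inter] at hv
    exact h.disj C hC B hB hne v (hHC hv.1) hv.2
  leaf := h.leaf.mono (Finset.filter_subset _ _)

/-- contracting block `B`, keeping those members that avoid `v`. -/
theorem St.con {A Hs : Finset (Finset V)} (h : St A Hs) {B : Finset V} (hB : B ∈ A) (v : V)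
    (hvB : v ∈ B) (hv : ∀ H ∈ Hs, H ⊆ B → v ∈ H) :
    St (A.erase B) ((Hs.filter fun H => v ∉ H).image fun H => H \ B) where
  disj := fun C hC C' hC' => h.disj C (Finset.mem_of_mem_erase hC) C' (Finset.mem_of_mem_erase hC')
  ne := by
    intro H' hH'
    obtain ⟨H, hH, rfl⟩ := Finset.mem_image.1 hH'
    obtain ⟨h1, h2⟩ := Finset.mem_filter.1 hH
    rw [Finset.sdiff_nonempty]
    exact fun hs => h2 (hv H h1 hs)
  cov := by
    intro H' hH' w hw
    obtain ⟨H, hH, rfl⟩ := Finset.mem_image.1 hH'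
    obtain ⟨h1, h2⟩ := Finset.mem_filter.1 hH
    rw [Finset.mem_sdiff] at hw
    obtain ⟨C, hC, hwC⟩ := h.cov H h1 w hw.1
    refine ⟨C, Finset.mem_erase.2 ⟨?_, hC⟩, hwC⟩
    rintro rfl
    exact hw.2 hwC
  chain := by
    intro C hC H1 hH1 H2 hH2
    obtain ⟨H, hH, rfl⟩ := Finset.mem_image.1 hH1
    obtain ⟨H', hH', rfl⟩ := Finset.mem_image.1 hH2
    obtain ⟨hne, hC⟩ := Finset.mem_erase.1 hC
    have e : ∀ X : Finset V, (X \ B) ∩ C = X ∩ C := by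
      intro X
      ext w
      simp only [Finset.mem_inter, Finset.mem_sdiff]
      have := h.disj C hC B hB hne w
      tauto
    rw [e, e]
    exact h.chain C hC H (Finset.mem_filter.1 hH).1 H' (Finset.mem_filter.1 hH').1
  blk := by
    intro C hC
    obtain ⟨hne, hC⟩ := Finset.mem_erase.1 hC
    obtain ⟨H, hH, hHC⟩ := h.blk C hC
    refine ⟨H \ B, Finset.mem_image.2 ⟨H, Finset.mem_filter.2 ⟨hH, ?_⟩, rfl⟩,
      Finset.sdiff_subset.trans hHC⟩
    exact fun hvH => h.disj C hC B hB hne v (hHC hvH) hvB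
  leaf := by
    have : ((Hs.filter fun H => v ∉ H).image fun H => H \ B) ⊆ Hs.image fun H => H ∩ Bᶜ := by
      intro X hX
      obtain ⟨H, hH, rfl⟩ := Finset.mem_image.1 hX
      refine Finset.mem_image.2 ⟨H, (Finset.mem_filter.1 hH).1, ?_⟩
      ext w; simp
    exact (h.leaf.restrict Bᶜ).mono this

def PM (Hs : Finset (Finset V)) (k : ℕ) (u W : Finset V) (T : Finset V) : Prop :=
  PW W T ∨ ∃ M, IsMatchingOf Hs M ∧ M.card = k ∧ ∀ H ∈ M, H ⊆ T ∪ u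

theorem up_PM (Hs : Finset (Finset V)) (k : ℕ) (u W : Finset V) : Up (PM Hs k u W) := by
  rintro S T hST (h | ⟨M, h1, h2, h3⟩)
  · exact Or.inl (up_PW _ _ _ hST h)
  · exact Or.inr ⟨M, h1, h2, fun H hH => (h3 H hH).trans (Finset.union_subset_union_left hST)⟩

/-- colon by a full minimal member inside the block. -/
theorem PM_full {A Hs : Finset (Finset V)} (h : St A Hs) {B F : Finset V} (hB : B ∈ A)
    (hF : F ∈ Hs) (hFB : F ⊆ B) (k : ℕ) (W T : Finset V) :
    PM Hs (k + 1) F W T ↔ PM (Hs.filter fun H => H ∩ B = ∅) k ∅ W T := by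
  refine or_congr_right ?_
  constructor
  · rintro ⟨M, hM, hc, hT⟩
    have hex : ∃ H0 ∈ M, ∀ H ∈ M, H ≠ H0 → H ∩ B = ∅ := by
      by_cases hh : ∃ H0 ∈ M, (H0 ∩ B).Nonempty
      · obtain ⟨H0, hH0, hne⟩ := hh
        refine ⟨H0, hH0, fun H hH hHH => ?_⟩
        by_contra hcon
        exact h.two hB (hM.1 hH) (hM.1 hH0) (Finset.nonempty_iff_ne_empty.2 hcon) hne
          (hM.2 H hH H0 hH0 hHH)
      · obtain ⟨H0, hH0⟩ : M.Nonempty := Finset.card_pos.1 (by omega)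
        refine ⟨H0, hH0, fun H hH _ => ?_⟩
        by_contra hcon
        exact hh ⟨H, hH, Finset.nonempty_iff_ne_empty.2 hcon⟩
    obtain ⟨H0, hH0, hH0'⟩ := hex
    refine ⟨M.erase H0, ⟨?_, ?_⟩, ?_, ?_⟩
    · intro H hH
      obtain ⟨h1, h2⟩ := Finset.mem_erase.1 hH
      exact Finset.mem_filter.2 ⟨hM.1 h2, hH0' H h2 h1⟩
    · intro H hH H' hH'
      exact hM.2 H (Finset.mem_of_mem_erase hH) H' (Finset.mem_of_mem_erase hH')
    · rw [Finset.card_erase_of_mem hH0]; omega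
    · intro H hH v hv
      obtain ⟨h1, h2⟩ := Finset.mem_erase.1 hH
      rw [Finset.union_empty]
      rcases Finset.mem_union.1 (hT H h2 hv) with h3 | h3
      · exact h3
      · exfalso
        exact Finset.notMem_empty v (hH0' H h2 h1 ▸ Finset.mem_inter.2 ⟨hv, hFB h3⟩)
  · rintro ⟨M, hM, hc, hT⟩
    have hd : ∀ H ∈ M, H ∩ B = ∅ := fun H hH => (Finset.mem_filter.1 (hM.1 hH)).2
    have hdF : ∀ H ∈ M, H ∩ F = ∅ := fun H hH => by
      rw [← Finset.subset_empty, ← hd H hH]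
      exact Finset.inter_subset_inter_left hFB
    have hFM : F ∉ M := by
      intro hFM
      have := hdF F hFM
      rw [Finset.inter_self] at this
      exact (h.ne F hF).ne_empty this
    refine ⟨insert F M, ⟨?_, ?_⟩, ?_, ?_⟩
    · exact Finset.insert_subset hF (hM.1.trans (Finset.filter_subset _ _))
    · intro H hH H' hH' hne
      rcases Finset.mem_insert.1 hH with e1 | e1 <;> rcases Finset.mem_insert.1 hH' with e2 | e2
      · exact absurd (e1.trans e2.symm) hne
      · rw [Finset.inter_comm, e1]; exact hdF H' e2
      · rw [e2]; exact hdF H e1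
      · exact hM.2 H e1 H' e2 hne
    · rw [Finset.card_insert_of_notMem hFM, hc]
    · intro H hH
      rcases Finset.mem_insert.1 hH with rfl | hH
      · exact Finset.subset_union_right
      · have := hT H hH
        rw [Finset.union_empty] at this
        exact this.trans Finset.subset_union_left

theorem PM_con {Hs : Finset (Finset V)} {B : Finset V}
    (hnest : ∀ H ∈ Hs, ∀ H' ∈ Hs, (H ∩ B).Nonempty → (H' ∩ B).Nonempty →
      ¬ H ⊆ B → ¬ H' ⊆ B → ∃ v, v ∉ B ∧ v ∈ H ∧ v ∈ H')
    (u : Finset V) (huB : u ⊆ B) (v : V) (hvu : v ∉ u)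
    (hv : ∀ H ∈ Hs, H ⊆ B → v ∈ H)
    (hu : ∀ H ∈ Hs, v ∉ H → H ∩ B ⊆ u) (k : ℕ) (W T : Finset V) :
    (PM Hs k u W T ∨ v ∈ T) ↔
      PM ((Hs.filter fun H => v ∉ H).image fun H => H \ B) k ∅ (insert v W) T := by
  by_cases hvT : v ∈ T
  · simp only [hvT, or_true, true_iff]
    exact Or.inl ⟨v, Finset.mem_insert_self _ _, hvT⟩
  have e1 : PW (insert v W) T ↔ PW W T := by
    simp [PW, hvT]
  rw [or_iff_left hvT]
  unfold PM
  rw [e1]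
  refine or_congr_right ?_
  constructor
  · rintro ⟨M, hM, hc, hT⟩
    have hvM : ∀ H ∈ M, v ∉ H := by
      intro H hH hvH
      rcases Finset.mem_union.1 (hT H hH hvH) with h1 | h1
      · exact hvT h1
      · exact hvu h1
    have hinj : Set.InjOn (fun H => H \ B) (M : Set (Finset V)) := by
      intro H hH H' hH' he
      by_contra hne
      have hd := hM.2 H hH H' hH' hne
      obtain ⟨w, hwH, hwB⟩ := Finset.not_subset.1
        (fun hs => hvM H hH (hv H (hM.1 hH) hs))
      have hw : w ∈ H' \ B := by
        have : w ∈ H \ B := Finset.mem_sdiff.2 ⟨hwH, hwB⟩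
        have he' : H \ B = H' \ B := he
        rwa [he'] at this
      exact Finset.notMem_empty w (hd ▸ Finset.mem_inter.2 ⟨hwH, (Finset.mem_sdiff.1 hw).1⟩)
    refine ⟨M.image fun H => H \ B, ⟨?_, ?_⟩, ?_, ?_⟩
    · refine Finset.image_subset_image fun H hH => Finset.mem_filter.2 ⟨hM.1 hH, hvM H hH⟩
    · intro X hX Y hY hne
      obtain ⟨H, hH, rfl⟩ := Finset.mem_image.1 hX
      obtain ⟨H', hH', rfl⟩ := Finset.mem_image.1 hY
      have hd := hM.2 H hH H' hH' (fun e => hne (by rw [e]))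
      rw [← Finset.subset_empty, ← hd]
      exact Finset.inter_subset_inter Finset.sdiff_subset Finset.sdiff_subset
    · rw [Finset.card_image_of_injOn hinj, hc]
    · intro X hX w hw
      obtain ⟨H, hH, rfl⟩ := Finset.mem_image.1 hX
      rw [Finset.mem_sdiff] at hw
      rw [Finset.union_empty]
      rcases Finset.mem_union.1 (hT H hH hw.1) with h1 | h1
      · exact h1
      · exact absurd (huB h1) hw.2
  · rintro ⟨M, hM, hc, hT⟩
    have hch : ∀ X : Finset V, ∃ H : Finset V, X ∈ M → H ∈ Hs ∧ v ∉ H ∧ H \ B = X := by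
      intro X
      by_cases hX : X ∈ M
      · obtain ⟨H, hH, rfl⟩ := Finset.mem_image.1 (hM.1 hX)
        obtain ⟨h1, h2⟩ := Finset.mem_filter.1 hH
        exact ⟨H, fun _ => ⟨h1, h2, rfl⟩⟩
      · exact ⟨∅, fun hh => absurd hh hX⟩
    choose f hf using hch
    have hinj : Set.InjOn f (M : Set (Finset V)) := by
      intro X hX Y hY he
      rw [← (hf X hX).2.2, ← (hf Y hY).2.2, he]
    refine ⟨M.image f, ⟨?_, ?_⟩, ?_, ?_⟩
    · intro H hH
      obtain ⟨X, hX, rfl⟩ := Finset.mem_image.1 hH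
      exact (hf X hX).1
    · intro H hH H' hH' hne
      obtain ⟨X, hX, rfl⟩ := Finset.mem_image.1 hH
      obtain ⟨Y, hY, rfl⟩ := Finset.mem_image.1 hH'
      have hXY : X ≠ Y := fun e => hne (by rw [e])
      have hd := hM.2 X hX Y hY hXY
      obtain ⟨a1, a2, a3⟩ := hf X hX
      obtain ⟨b1, b2, b3⟩ := hf Y hY
      have hout : ∀ w, w ∉ B → w ∈ f X → w ∈ f Y → False := by
        intro w hw h1 h2
        refine Finset.notMem_empty w (hd ▸ Finset.mem_inter.2 ⟨?_, ?_⟩)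
        · rw [← a3]; exact Finset.mem_sdiff.2 ⟨h1, hw⟩
        · rw [← b3]; exact Finset.mem_sdiff.2 ⟨h2, hw⟩
      rw [Finset.eq_empty_iff_forall_notMem]
      intro w hw
      rw [Finset.mem_inter] at hw
      by_cases hwB : w ∈ B
      · obtain ⟨z, hz, hz1, hz2⟩ := hnest (f X) a1 (f Y) b1 ⟨w, Finset.mem_inter.2 ⟨hw.1, hwB⟩⟩
          ⟨w, Finset.mem_inter.2 ⟨hw.2, hwB⟩⟩ (fun hs => a2 (hv _ a1 hs)) (fun hs => b2 (hv _ b1 hs))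
        exact hout z hz hz1 hz2
      · exact hout w hwB hw.1 hw.2
    · rw [Finset.card_image_of_injOn hinj, hc]
    · intro H hH w hw
      obtain ⟨X, hX, rfl⟩ := Finset.mem_image.1 hH
      obtain ⟨a1, a2, a3⟩ := hf X hX
      by_cases hwB : w ∈ B
      · exact Finset.mem_union_right _ (hu _ a1 a2 (Finset.mem_inter.2 ⟨hw, hwB⟩))
      · have hwX : w ∈ X := by rw [← a3]; exact Finset.mem_sdiff.2 ⟨hw, hwB⟩
        have := hT X hX hwX
        rw [Finset.union_empty] at this
        exact Finset.mem_union_left _ this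

theorem main_WR (c d : ℕ) (hcd : c + d = Fintype.card V) (a : ℕ) :
    ∀ (A Hs : Finset (Finset V)) (k : ℕ) (W : Finset V), A.card = a → St A Hs → k ≤ a + 1 →
      (∀ B ∈ A, ∀ v ∈ B, v ∉ W) → W.card + a + 1 = k + c →
      WR (theta V K d) (sqId K (PM Hs k ∅ W)) := by
  induction a with
  | zero =>
    intro A Hs k W hA hSt hk hW hc
    rcases Nat.eq_zero_or_pos k with rfl | hk0
    · rw [sq_true (Or.inr ⟨∅, ⟨by simp, by simp⟩, by simp⟩)]
      exact WR_top _
    · rw [sq_congr (Q := PW W)]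
      · exact WR_PW d W (by omega)
      · intro T
        refine or_iff_left ?_
        rintro ⟨M, hM, hMc, -⟩
        have := hSt.card_le hM
        omega
  | succ a ih =>
    intro A Hs k W hA hSt hk hW hc
    rcases Nat.eq_zero_or_pos k with rfl | hk0
    · rw [sq_true (Or.inr ⟨∅, ⟨by simp, by simp⟩, by simp⟩)]
      exact WR_top _
    by_cases hka : k = a + 1 + 1
    · rw [sq_congr (Q := PW W)]
      · exact WR_PW d W (by omega)
      · intro T
        refine or_iff_left ?_
        rintro ⟨M, hM, hMc, -⟩
        have := hSt.card_le hM
        omega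
    obtain ⟨k, rfl⟩ : ∃ k', k = k' + 1 := ⟨k - 1, by omega⟩
    obtain ⟨B, hB, hnest⟩ := hSt.nest (Finset.card_pos.1 (by omega))
    -- smallest member inside the block
    obtain ⟨H0, hH0, hH0B⟩ := hSt.blk B hB
    obtain ⟨F, hF, hFmin⟩ := (Hs.filter fun H => H ⊆ B).exists_min_image
      Finset.card ⟨H0, Finset.mem_filter.2 ⟨hH0, hH0B⟩⟩
    obtain ⟨hFs, hFB⟩ := Finset.mem_filter.1 hF
    have hFsub : ∀ H ∈ Hs, H ⊆ B → F ⊆ H := by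
      intro H hH hHB
      have hle := hFmin H (Finset.mem_filter.2 ⟨hH, hHB⟩)
      have := hSt.chain B hB F hFs H hH
      rw [Finset.inter_eq_left.2 hFB, Finset.inter_eq_left.2 hHB] at this
      rcases this with h1 | h1
      · exact h1
      · exact (Finset.eq_of_subset_of_card_le h1 hle).symm.subset
    have hAe : (A.erase B).card = a := by rw [Finset.card_erase_of_mem hB]; omega
    have hWe : ∀ C ∈ A.erase B, ∀ v ∈ C, v ∉ W := fun C hC => hW C (Finset.mem_of_mem_erase hC)
    suffices hin : ∀ n, ∀ u ⊆ F, (F \ u).card = n →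
        WR (theta V K d) (sqId K (PM Hs (k + 1) u W)) from hin _ ∅ (Finset.empty_subset _) rfl
    intro n
    induction n with
    | zero =>
      intro u hu hn
      have : u = F := subset_antisymm hu (by
        rw [← Finset.sdiff_eq_empty_iff_subset]; exact Finset.card_eq_zero.1 hn)
      subst this
      rw [sq_congr (fun T => PM_full hSt hB hFs hFB k W T)]
      exact ih _ _ k W hAe (hSt.del hB) (by omega) hWe (by omega)
    | succ n ihn =>
      intro u hu hn
      have hFu : ¬ F ∩ B ⊆ u := by
        rw [Finset.inter_eq_left.2 hFB]
        intro hs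
        rw [Finset.sdiff_eq_empty_iff_subset.2 hs] at hn
        simp at hn
      obtain ⟨H1, hH1, hmin⟩ := (Hs.filter fun H => ¬ H ∩ B ⊆ u).exists_min_image
        (fun H => (H ∩ B).card) ⟨F, Finset.mem_filter.2 ⟨hFs, hFu⟩⟩
      obtain ⟨hH1s, hH1u⟩ := Finset.mem_filter.1 hH1
      have hH1sub : ∀ H ∈ Hs, ¬ H ∩ B ⊆ u → H1 ∩ B ⊆ H ∩ B := by
        intro H hH hHu
        have hle := hmin H (Finset.mem_filter.2 ⟨hH, hHu⟩)
        rcases hSt.chain B hB H1 hH1s H hH with h1 | h1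
        · exact h1
        · exact (Finset.eq_of_subset_of_card_le h1 hle).symm.subset
      obtain ⟨v, hvH1, hvu⟩ := Finset.not_subset.1 hH1u
      have hvF : v ∈ F := (Finset.mem_inter.1 (hH1sub F hFs hFu hvH1)).1
      have hvB : v ∈ B := hFB hvF
      have hvW : v ∉ W := hW B hB v hvB
      refine WR_sq (up_PM _ _ _ _) v _ ?_ ?_
      · rw [sq_congr (Q := PM Hs (k + 1) (insert v u) W)]
        · refine ihn _ (Finset.insert_subset hvF hu) ?_
          rw [Finset.sdiff_insert, Finset.card_erase_of_mem (Finset.mem_sdiff.2 ⟨hvF, hvu⟩)]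
          omega
        · intro T
          refine or_congr ?_ ?_
          · simp only [PW, Finset.mem_insert]
            refine exists_congr fun w => and_congr_right fun hw => ?_
            have : w ≠ v := fun e => hvW (e ▸ hw)
            simp [this]
          · rw [Finset.insert_union, Finset.union_insert]
      · have hvall : ∀ H ∈ Hs, H ⊆ B → v ∈ H := fun H hH hHB => hFsub H hH hHB hvF
        rw [sq_congr (fun T => PM_con hnest u (hu.trans hFB) v hvu hvall ?_ (k + 1) W T)]
        · refine ih _ _ (k + 1) (insert v W) hAe (hSt.con hB v hvB hvall) (by omega) ?_ ?_
          · intro C hC w hw hwW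
            rcases Finset.mem_insert.1 hwW with rfl | hwW
            · exact hSt.disj C (Finset.mem_of_mem_erase hC) B hB (Finset.ne_of_mem_erase hC) _ hw hvB
            · exact hWe C hC w hw hwW
          · rw [Finset.card_insert_of_notMem hvW]; omega
        · intro H hH hvH
          by_contra hcon
          exact hvH (Finset.mem_inter.1 (hH1sub H hH hcon hvH1)).1

end Main
section Final

variable {V : Type} [Fintype V] [DecidableEq V]

theorem leaf_free {S : Finset (Finset V)}
    (hanti : ∀ F ∈ S, ∀ G ∈ S, F ⊆ G → F = G) (hne : ∀ F ∈ S, F.Nonempty)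
    {F : Finset V} (hF : IsLeafOf S F) : ∃ v ∈ F, ∀ H ∈ S, v ∈ H → H = F := by
  obtain ⟨hFS, h | ⟨G, hG, hGF, hj⟩⟩ := hF
  · obtain ⟨v, hv⟩ := hne F hFS
    exact ⟨v, hv, fun H hH _ => h H hH⟩
  · obtain ⟨v, hv, hvG⟩ := Finset.not_subset.1 (fun hs => hGF (hanti F hFS G hG hs).symm)
    refine ⟨v, hv, fun H hH hvH => ?_⟩
    by_contra hHF
    exact hvG (Finset.mem_inter.1 (hj H hH hHF (Finset.mem_inter.2 ⟨hv, hvH⟩))).2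

theorem graft_leaf_erase {S : Finset (Finset V)} {G F : Finset V}
    (hanti : ∀ F ∈ S, ∀ G ∈ S, F ⊆ G → F = G) (hne : ∀ F ∈ S, F.Nonempty)
    (h : IsGrafted (S.erase G)) (hF : IsLeafOf S F) (hFG : F ≠ G) : IsLeafOf (S.erase G) F := by
  obtain ⟨v, hv, hfree⟩ := leaf_free hanti hne hF
  generalize hS' : S.erase G = S' at h
  cases h with
  | intro _ Fs Gs hunion hdisj hcover hleaves hFdisj hrec =>
    rw [hleaves]
    have hFS : F ∈ Fs ∪ Gs := by
      rw [← hunion, ← hS']; exact Finset.mem_erase.2 ⟨hFG, hF.1⟩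
    rcases Finset.mem_union.1 hFS with h1 | h1
    · exact h1
    · obtain ⟨F', hF', hvF'⟩ := hcover F h1 v hv
      have : F' ∈ S := by
        apply Finset.mem_of_mem_erase (a := G)
        rw [hS', hunion]; exact Finset.mem_union_left _ hF'
      rw [← hfree F' this hvF']; exact hF'

theorem graft_chain {S : Finset (Finset V)} (h : IsGrafted S) :
    (∀ F ∈ S, ∀ G ∈ S, F ⊆ G → F = G) → (∀ F ∈ S, F.Nonempty) →
    ∀ F, IsLeafOf S F → ∀ G ∈ S, ∀ G' ∈ S, G ∩ F ⊆ G' ∩ F ∨ G' ∩ F ⊆ G ∩ F := by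
  induction h with
  | intro S Fs Gs hunion hdisj hcover hleaves hFdisj hrec ih =>
    intro hanti hne F hF G hG G' hG'
    have hFFs := (hleaves F).1 hF
    have hcase : ∀ X ∈ S, F ∩ X = ∅ ∨ X = F ∨ X ∈ Gs := by
      intro X hX
      rw [hunion] at hX
      rcases Finset.mem_union.1 hX with h1 | h1
      · by_cases e : X = F
        · exact Or.inr (Or.inl e)
        · exact Or.inl (hFdisj F hFFs X h1 (Ne.symm e))
      · exact Or.inr (Or.inr h1)
    rcases hcase G hG with h1 | h1 | h1
    · left; rw [Finset.inter_comm, h1]; exact Finset.empty_subset _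
    · right; rw [h1, Finset.inter_self]; exact Finset.inter_subset_right
    rcases hcase G' hG' with h2 | h2 | h2
    · right; rw [Finset.inter_comm, h2]; exact Finset.empty_subset _
    · left; rw [h2, Finset.inter_self]; exact Finset.inter_subset_right
    have hnG : ∀ X ∈ Gs, X ≠ F := fun X hX e =>
      Finset.disjoint_left.1 hdisj hFFs (e ▸ hX)
    by_cases h3 : ∃ X ∈ Gs, X ≠ G ∧ X ≠ G'
    · obtain ⟨X, hX, hXG, hXG'⟩ := h3
      refine ih X hX (fun A hA B hB => hanti A (Finset.mem_of_mem_erase hA) B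
        (Finset.mem_of_mem_erase hB)) (fun A hA => hne A (Finset.mem_of_mem_erase hA)) F
        (graft_leaf_erase hanti hne (hrec X hX) hF (hnG X hX).symm) G
        (Finset.mem_erase.2 ⟨hXG.symm, hG⟩) G' (Finset.mem_erase.2 ⟨hXG'.symm, hG'⟩)
    · push Not at h3
      rcases hF.2 with h4 | ⟨J, hJ, hJF, hj⟩
      · exact absurd (h4 G hG) (hnG G h1)
      have e1 := hj G hG (hnG G h1)
      have e2 := hj G' hG' (hnG G' h2)
      rw [Finset.inter_comm G F, Finset.inter_comm G' F]
      rcases hcase J hJ with h5 | h5 | h5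
      · left; rw [h5] at e1
        exact e1.trans (Finset.empty_subset _)
      · exact absurd h5 hJF
      · by_cases e : J = G
        · right; rw [← e]; exact e2
        · left; rw [← h3 J h5 e]; exact e1

theorem graft_St {S : Finset (Finset V)} (hanti : ∀ F ∈ S, ∀ G ∈ S, F ⊆ G → F = G)
    (hne : ∀ F ∈ S, F.Nonempty) (h : IsCMForestFacets S) :
    ∃ Fs ⊆ S, St Fs S := by
  have hch := graft_chain h.2 hanti hne
  obtain ⟨hl, hg⟩ := h
  cases hg with
  | intro _ Fs Gs hunion hdisj hcover hleaves hFdisj hrec =>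
    have hsub : Fs ⊆ S := by rw [hunion]; exact Finset.subset_union_left
    refine ⟨Fs, hsub, ?_, hne, ?_, ?_, ?_, hl⟩
    · intro B hB B' hB' hBB v hv hv'
      exact Finset.notMem_empty v (hFdisj B hB B' hB' hBB ▸ Finset.mem_inter.2 ⟨hv, hv'⟩)
    · intro H hH v hv
      rw [hunion] at hH
      rcases Finset.mem_union.1 hH with h1 | h1
      · exact ⟨H, h1, hv⟩
      · exact hcover H h1 v hv
    · intro B hB
      exact hch B ((hleaves B).2 hB)
    · intro B hB
      exact ⟨B, hsub hB, subset_rfl⟩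

theorem St.isMatching {Fs S : Finset (Finset V)} (h : St Fs S) {M : Finset (Finset V)}
    (hM : M ⊆ Fs) (hs : Fs ⊆ S) : IsMatchingOf S M := by
  refine ⟨hM.trans hs, fun F hF G hG hne => ?_⟩
  rw [Finset.eq_empty_iff_forall_notMem]
  intro v hv
  rw [Finset.mem_inter] at hv
  exact h.disj F (hM hF) G (hM hG) hne v hv.1 hv.2

theorem matchingNumber_eq {Fs S : Finset (Finset V)} (h : St Fs S) (hs : Fs ⊆ S) :
    matchingNumberOf S = Fs.card := by
  apply IsGreatest.csSup_eq
  refine ⟨⟨Fs, h.isMatching subset_rfl hs, rfl⟩, ?_⟩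
  rintro n ⟨M, hM, rfl⟩
  exact h.card_le hM

variable {K : Type} [Field K]

theorem facet_pow_le (S : Finset (Finset V)) (k : ℕ) :
    (facetIdealOf K S) ^ k ≤ Ideal.span ((fun s => monomial s (1 : K)) ''
      {s : V →₀ ℕ | ∃ l : List (Finset V), l.length = k ∧ (∀ H ∈ l, H ∈ S) ∧
        s = (l.map fun H => Finsupp.indicator H (fun _ _ => 1)).sum}) := by
  induction k with
  | zero =>
    rw [pow_zero, Ideal.one_eq_top, top_le_iff, Ideal.eq_top_iff_one]
    exact Ideal.subset_span ⟨0, ⟨[], by simp⟩, by simp⟩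
  | succ k ih =>
    rw [pow_succ']
    refine (Ideal.mul_mono_right ih).trans ?_
    rw [facetIdealOf, Ideal.span_mul_span', Ideal.span_le]
    rintro _ ⟨_, ⟨F, hF, rfl⟩, _, ⟨_, ⟨l, hl, hlS, rfl⟩, rfl⟩, rfl⟩
    refine Ideal.subset_span ⟨_, ⟨F :: l, by simp [hl], ?_, rfl⟩, ?_⟩
    · intro H hH
      rcases List.mem_cons.1 hH with rfl | hH
      · exact hF
      · exact hlS H hH
    · simp only [xMon_eq_monomial, monomial_mul, List.map_cons, List.sum_cons, mul_one]

theorem list_disj (T : Finset V) (l : List (Finset V))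
    (h : (l.map fun H => Finsupp.indicator H (fun _ _ => 1)).sum ≤
      (Finsupp.indicator T (fun _ _ => 1) : V →₀ ℕ)) :
    (∀ H ∈ l, H ⊆ T) ∧ l.Pairwise (fun H H' => H ∩ H' = ∅) := by
  induction l with
  | nil => simp
  | cons F l ih =>
    rw [List.map_cons, List.sum_cons] at h
    obtain ⟨h1, h2⟩ := ih (le_trans le_add_self h)
    have hle1 : ∀ H ∈ l, (Finsupp.indicator H (fun _ _ => 1) : V →₀ ℕ) ≤
        (l.map fun H => Finsupp.indicator H (fun _ _ => 1)).sum := by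
      intro H hH
      exact List.single_le_sum (fun _ _ => zero_le) _ (List.mem_map.2 ⟨H, hH, rfl⟩)
    have hT : ∀ v, (Finsupp.indicator T (fun _ _ => 1) : V →₀ ℕ) v ≤ 1 := by
      intro v
      by_cases hv : v ∈ T
      · rw [Finsupp.indicator_of_mem hv]
      · rw [Finsupp.indicator_of_notMem hv]; omega
    refine ⟨?_, List.pairwise_cons.2 ⟨?_, h2⟩⟩
    · intro H hH
      rcases List.mem_cons.1 hH with rfl | hH
      · have := (ind_le_iff H _).1 (le_trans le_self_add h)
        exact this.trans (Finsupp.support_indicator_subset _ _)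
      · exact h1 H hH
    · intro H hH
      rw [Finset.eq_empty_iff_forall_notMem]
      intro v hv
      rw [Finset.mem_inter] at hv
      have a1 := h v
      have a2 := hle1 H hH v
      have a3 := hT v
      rw [Finsupp.add_apply, Finsupp.indicator_of_mem hv.1] at a1
      rw [Finsupp.indicator_of_mem hv.2] at a2
      omega

theorem xMon_mem_pow_iff {S : Finset (Finset V)} (hne : ∀ F ∈ S, F.Nonempty) (k : ℕ)
    (T : Finset V) : xMon K T ∈ (facetIdealOf K S) ^ k ↔ PM S k ∅ ∅ T := by
  constructor
  · intro h
    have h1 := facet_pow_le S k h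
    rw [mem_ideal_span_monomial_image] at h1
    obtain ⟨_, ⟨l, hl, hlS, rfl⟩, hle⟩ := h1 (Finsupp.indicator T (fun _ _ => 1)) (by
      rw [xMon_eq_monomial]; simp)
    obtain ⟨h2, h3⟩ := list_disj T l hle
    have hnd : l.Nodup := by
      refine List.Pairwise.imp_of_mem ?_ h3
      intro a b ha hb hab e
      subst e
      rw [Finset.inter_self] at hab
      exact (hne a (hlS a ha)).ne_empty hab
    refine Or.inr ⟨l.toFinset, ⟨?_, ?_⟩, ?_, ?_⟩
    · intro H hH; exact hlS H (List.mem_toFinset.1 hH)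
    · intro F hF G hG hFG
      refine List.Pairwise.forall_of_forall_of_flip (R := fun F G => F ≠ G → F ∩ G = ∅)
        ?_ ?_ ?_ (List.mem_toFinset.1 hF) (List.mem_toFinset.1 hG) hFG
      · intro x _ hx; exact absurd rfl hx
      · exact List.Pairwise.imp (fun {a b} (hab : a ∩ b = ∅) (_ : a ≠ b) => hab) h3
      · exact List.Pairwise.imp (fun {a b} (hab : a ∩ b = ∅) (_ : b ≠ a) => by rw [Finset.inter_comm]; exact hab) h3
    · rw [List.toFinset_card_of_nodup hnd, hl]
    · intro H hH; rw [Finset.union_empty]; exact h2 H (List.mem_toFinset.1 hH)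
  · rintro (⟨w, hw, _⟩ | ⟨M, hM, hc, hT⟩)
    · exact absurd hw (Finset.notMem_empty _)
    · have h1 : ∏ H ∈ M, xMon K H ∈ (facetIdealOf K S) ^ k := by
        rw [← hc, ← Finset.prod_const]
        exact Ideal.prod_mem_prod fun H hH => Ideal.subset_span ⟨H, hM.1 hH, rfl⟩
      refine Ideal.mem_of_dvd _ ?_ h1
      have h2 : ∏ H ∈ M, xMon K H = xMon K (M.biUnion id) := by
        rw [xMon, Finset.prod_biUnion]
        · rfl
        · intro F hF G hG hFG
          exact Finset.disjoint_iff_inter_eq_empty.2 (hM.2 F hF G hG hFG)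
      rw [h2]
      refine Finset.prod_dvd_prod_of_subset _ _ _ ?_
      rw [Finset.biUnion_subset]
      intro H hH
      have := hT H hH
      rwa [Finset.union_empty] at this

theorem sqfreePow_eq {S : Finset (Finset V)} (hne : ∀ F ∈ S, F.Nonempty) (k : ℕ) :
    sqfreePow K (facetIdealOf K S) k = sqId K (PM S k ∅ ∅) := by
  rw [sqfreePow, sqId]
  congr 1
  ext p
  constructor
  · rintro ⟨⟨T, rfl⟩, h⟩
    exact ⟨T, (xMon_mem_pow_iff hne k T).1 h, rfl⟩
  · rintro ⟨T, hT, rfl⟩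
    exact ⟨⟨T, rfl⟩, (xMon_mem_pow_iff hne k T).2 hT⟩

theorem dim_vars (W : Finset V) :
    ringKrullDim (MvPolynomial V K ⧸ Ideal.span ((X : V → MvPolynomial V K) '' W)) ≤
      ((Fintype.card V - W.card : ℕ) : WithBot ℕ∞) := by
  let J := Ideal.span ((X : V → MvPolynomial V K) '' W)
  let φ : MvPolynomial {v // v ∉ W} K →ₐ[K] (MvPolynomial V K ⧸ J) :=
    aeval fun v => Ideal.Quotient.mkₐ K J (X v.1)
  have hφ : Function.Surjective φ := by
    have hr : ∀ p : MvPolynomial V K, Ideal.Quotient.mkₐ K J p ∈ φ.range := by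
      intro p
      induction p using MvPolynomial.induction_on with
      | C a => exact ⟨C a, by
          simp only [φ]
          exact (AlgHom.commutes _ a).trans (AlgHom.commutes (Ideal.Quotient.mkₐ K J) a).symm⟩
      | add p q hp hq => rw [map_add]; exact add_mem hp hq
      | mul_X p v hp =>
        rw [map_mul]
        refine mul_mem hp ?_
        by_cases hv : v ∈ W
        · have : Ideal.Quotient.mkₐ K J (X v) = 0 :=
            Ideal.Quotient.eq_zero_iff_mem.2 (Ideal.subset_span ⟨v, hv, rfl⟩)
          rw [this]; exact zero_mem _
        · exact ⟨X ⟨v, hv⟩, by simp [φ]⟩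
    intro y
    obtain ⟨p, rfl⟩ := Ideal.Quotient.mk_surjective y
    exact hr p
  refine (ringKrullDim_le_of_surjective φ.toRingHom hφ).trans ?_
  rw [MvPolynomial.ringKrullDim_of_isNoetherianRing, ringKrullDim_eq_zero_of_field, zero_add,
    Nat.card_eq_fintype_card, Fintype.card_subtype_compl, Fintype.card_coe]

theorem dim_le {Fs S : Finset (Finset V)} (h : St Fs S) (hs : Fs ⊆ S) (k : ℕ)
    (hk : k ≤ Fs.card) :
    ringKrullDim (MvPolynomial V K ⧸ sqId K (PM S k ∅ ∅)) ≤
      ((Fintype.card V - (Fs.card - k + 1) : ℕ) : WithBot ℕ∞) := by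
  classical
  rw [ringKrullDim_quotient]
  refine iSup_le fun p => ?_
  let P := p.head.1.asIdeal
  have hJP : sqId K (PM S k ∅ ∅) ≤ P := p.head.2
  have hprime : P.IsPrime := p.head.1.isPrime
  let W : Finset V := Finset.univ.filter fun v => (X v : MvPolynomial V K) ∈ P
  have hWcard : Fs.card - k + 1 ≤ W.card := by
    have h1 : (Fs.filter fun F => F ∩ W = ∅).card < k := by
      by_contra hcon
      push Not at hcon
      obtain ⟨M, hM, hMc⟩ := Finset.exists_subset_card_eq hcon
      have hmem : xMon K (M.biUnion id) ∈ P := hJP (Ideal.subset_span ⟨_, Or.inr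
        ⟨M, h.isMatching (hM.trans (Finset.filter_subset _ _)) hs, hMc, fun H hH => by
          rw [Finset.union_empty]; exact Finset.subset_biUnion_of_mem id hH⟩, rfl⟩)
      obtain ⟨v, hv, hvP⟩ := hprime.prod_mem_iff.1 hmem
      obtain ⟨F, hF, hvF⟩ := Finset.mem_biUnion.1 hv
      have := (Finset.mem_filter.1 (hM hF)).2
      exact Finset.notMem_empty v (this ▸ Finset.mem_inter.2 ⟨hvF,
        Finset.mem_filter.2 ⟨Finset.mem_univ _, hvP⟩⟩)
    have h2 : (Fs.filter fun F => ¬ F ∩ W = ∅).card ≤ W.card := by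
      have hex : ∀ F : Finset V, ∃ t : Finset V, F ∩ W = ∅ ∨ ∃ v, t = {v} ∧ v ∈ F ∩ W := by
        intro F
        by_cases hF : F ∩ W = ∅
        · exact ⟨∅, Or.inl hF⟩
        · obtain ⟨v, hv⟩ := Finset.nonempty_iff_ne_empty.2 hF
          exact ⟨{v}, Or.inr ⟨v, rfl, hv⟩⟩
      choose f hf using hex
      have : (Fs.filter fun F => ¬ F ∩ W = ∅).card ≤ (W.image fun v => ({v} : Finset V)).card := by
        refine Finset.card_le_card_of_injOn f ?_ ?_
        · intro F hF
          obtain ⟨_, hF2⟩ := Finset.mem_filter.1 hF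
          obtain ⟨v, hv, hvF⟩ := (hf F).resolve_left hF2
          exact Finset.mem_image.2 ⟨v, (Finset.mem_inter.1 hvF).2, hv.symm⟩
        · intro F hF G hG he
          obtain ⟨hF1, hF2⟩ := Finset.mem_filter.1 hF
          obtain ⟨hG1, hG2⟩ := Finset.mem_filter.1 hG
          obtain ⟨v, hv, hvF⟩ := (hf F).resolve_left hF2
          obtain ⟨w, hw, hwG⟩ := (hf G).resolve_left hG2
          rw [hv, hw, Finset.singleton_inj] at he
          subst he
          by_contra hne
          exact h.disj F hF1 G hG1 hne v (Finset.mem_inter.1 hvF).1 (Finset.mem_inter.1 hwG).1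
      exact this.trans Finset.card_image_le
    have h3 := Finset.card_filter_add_card_filter_not (s := Fs) (fun F => F ∩ W = ∅)
    omega
  have hle := dim_vars (K := K) W
  rw [ringKrullDim_quotient] at hle
  let q : LTSeries (PrimeSpectrum.zeroLocus
      (R := MvPolynomial V K) (Ideal.span ((X : V → MvPolynomial V K) '' W))) :=
    { length := p.length
      toFun := fun i => ⟨(p i).1, by
        have h1 : p.head ≤ p i := p.strictMono.monotone (Fin.zero_le i)
        have h2 : P ≤ (p i).1.asIdeal := h1
        have h3 : Ideal.span ((X : V → MvPolynomial V K) '' W) ≤ P := by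
          rw [Ideal.span_le]
          rintro _ ⟨v, hv, rfl⟩
          exact (Finset.mem_filter.1 hv).2
        exact h3.trans h2⟩
      step := fun i => p.step i }
  have hq : ((p.length : ℕ) : WithBot ℕ∞) ≤ _ := (Order.LTSeries.length_le_krullDim q).trans hle
  refine hq.trans ?_
  exact_mod_cast Nat.sub_le_sub_left hWcard _

theorem card_blocks_le {Fs S : Finset (Finset V)} (h : St Fs S) : Fs.card ≤ Fintype.card V := by
  have hex : ∀ B ∈ Fs, ∃ v, v ∈ B := fun B hB => by
    obtain ⟨v, hv, _⟩ := h.pt B hB; exact ⟨v, hv⟩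
  choose f hf using hex
  rw [← Finset.card_univ, ← Finset.card_attach]
  refine Finset.card_le_card_of_injOn (fun B => f B.1 B.2) (fun _ _ => Finset.mem_univ _) ?_
  intro B _ C _ he
  by_contra hne
  have he' : f B.1 B.2 = f C.1 C.2 := he
  exact h.disj B.1 B.2 C.1 C.2 (fun e => hne (Subtype.ext e)) _ (hf B.1 B.2) (he' ▸ hf C.1 C.2)

theorem sqId_le_max {P : Finset V → Prop} (h : ¬ P ∅) :
    sqId K P ≤ Ideal.span (Set.range (X : V → MvPolynomial V K)) := by
  rw [sqId, Ideal.span_le]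
  rintro _ ⟨T, hT, rfl⟩
  obtain ⟨v, hv⟩ : T.Nonempty := by
    rw [Finset.nonempty_iff_ne_empty]; rintro rfl; exact h hT
  exact Ideal.mem_of_dvd _ (Finset.dvd_prod_of_mem _ hv) (Ideal.subset_span ⟨v, rfl⟩)

theorem maxIdeal_ne_top : Ideal.span (Set.range (X : V → MvPolynomial V K)) ≠ ⊤ := by
  intro h
  have h1 : Ideal.span (Set.range (X : V → MvPolynomial V K)) ≤
      RingHom.ker (constantCoeff (σ := V) (R := K)) := by
    rw [Ideal.span_le]
    rintro _ ⟨v, rfl⟩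
    simp [RingHom.mem_ker]
  rw [h] at h1
  have := h1 (Submodule.mem_top (x := (1 : MvPolynomial V K)))
  simp [RingHom.mem_ker] at this

end Final

section Statements

variable {V : Type} [Fintype V] [DecidableEq V] (K : Type) [Field K]

theorem stmt1 (Δ : SimplicialComplexOn V)
    (hcov : ∀ v : V, ∃ F ∈ Δ.facets, v ∈ F)
    (hCM : IsCMForestFacets Δ.facets) :
    ∀ k : ℕ, 1 ≤ k → k ≤ matchingNumberOf Δ.facets →
      gradedDepth K (sqfreePow K (facetIdealOf K Δ.facets) k) =
        Fintype.card V - matchingNumberOf Δ.facets + k - 1 := by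
  intro k hk1 hk2
  have hne := Δ.nonempty_facet
  obtain ⟨Fs, hs, hSt⟩ := graft_St Δ.antichain hne hCM
  rw [matchingNumber_eq hSt hs] at hk2 ⊢
  rw [sqfreePow_eq hne]
  have hcard := card_blocks_le hSt
  have hPe : ¬ PM Δ.facets k ∅ ∅ (∅ : Finset V) := by
    rintro (⟨w, hw, _⟩ | ⟨M, hM, hMc, hT⟩)
    · exact absurd hw (Finset.notMem_empty _)
    · obtain ⟨H, hH⟩ : M.Nonempty := Finset.card_pos.1 (by omega)
      obtain ⟨v, hv⟩ := hne H (hM.1 hH)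
      have := hT H hH hv
      simp at this
  apply IsGreatest.csSup_eq
  constructor
  · refine ⟨theta V K (Fintype.card V - Fs.card + k - 1), theta_length _, theta_mem _, ?_⟩
    rw [isRegular_iff_WR]
    constructor
    · exact main_WR (Fs.card - k + 1) _ (by omega) Fs.card Fs Δ.facets k ∅ rfl hSt (by omega)
        (by simp) (by simp; omega)
    · intro htop
      apply maxIdeal_ne_top (V := V) (K := K)
      rw [eq_top_iff, ← htop]
      refine sup_le (sqId_le_max hPe) ?_
      rw [Ideal.ofList, Ideal.span_le]
      exact fun r hr => theta_mem _ r hr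
  · rintro n ⟨rs, rfl, -, hreg⟩
    rw [isRegular_iff_WR] at hreg
    have h1 := (WR_length_le rs _ hreg.1 hreg.2).trans (dim_le hSt hs k hk2)
    have h2 : rs.length ≤ Fintype.card V - (Fs.card - k + 1) := by exact_mod_cast h1
    omega

end Statements
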